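/- Let p be an odd prime and n ≥ 2. Let L be a finite field with |L| = p^n and K = 𝔽_p. If f : L∖{0} → K is difference balanced and balanced, then for every b ∈ K∖{0} the preimage D_b := {x ∈ L∖{0} : f(x) = b}, viewed as a subset of the cyclic group L^×, is a ((p^n−1)/(p−1), p−1, p^{n−1}, p^{n−2}) relative difference set relative to the subgroup K^× of nonzero elements of the prime subfield. -/

import Mathlib

/-- A function `f : L∖{0} → K` is balanced. -/
def IsBalanced {K L : Type*} [Field K] [Field L] (q n : ℕ) (f : L → K) : Prop :=
  Nat.card {x : L | x ≠ 0 ∧ f x = 0} = q ^ (n - 1) - 1 ∧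
    ∀ b : K, b ≠ 0 → Nat.card {x : L | x ≠ 0 ∧ f x = b} = q ^ (n - 1)

/-- A function `f : L∖{0} → K` is difference balanced. -/
def IsDiffBalanced {K L : Type*} [Field K] [Field L] (q n : ℕ) (f : L → K) : Prop :=
  ∀ a : L, a ≠ 0 → a ≠ 1 → IsBalanced q n (fun x => f (a * x) - f x)

/-- `f` is `d`-homogeneous: `gcd(d, q−1) = 1` and `f(cx) = c^d f(x)` for all
`c ∈ K∖{0}` and `x ∈ L∖{0}`. -/
def IsDHomogeneous {K L : Type*} [Field K] [Field L] [Algebra K L] (q d : ℕ)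
    (f : L → K) : Prop :=
  Nat.Coprime d (q - 1) ∧
    ∀ c : K, c ≠ 0 → ∀ x : L, x ≠ 0 → f (algebraMap K L c * x) = c ^ d * f x

/-- `N_{b₁,b₂}(a) = |{x ∈ L∖{0} : f(x) = b₁ and f(ax) = b₂}|`. -/
noncomputable def Ntt {K L : Type*} [Field K] [Field L] (f : L → K) (a : L) (b₁ b₂ : K) : ℕ :=
  Nat.card {x : L | x ≠ 0 ∧ f x = b₁ ∧ f (a * x) = b₂}

/-- `f` is two-tuple balanced. -/
def IsTwoTupleBalanced {K L : Type*} [Field K] [Field L] [Algebra K L] (q n : ℕ)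
    (f : L → K) : Prop :=
  (∀ a : L, a ≠ 0 → (∀ c : K, algebraMap K L c ≠ a) →
      (Ntt f a 0 0 = q ^ (n - 2) - 1 ∧
        ∀ b₁ b₂ : K, ¬(b₁ = 0 ∧ b₂ = 0) → Ntt f a b₁ b₂ = q ^ (n - 2))) ∧
  (∀ c : K, c ≠ 0 → ∃ μ : K,
      (∀ x : L, x ≠ 0 → f (algebraMap K L c * x) = μ * f x) ∧
      Ntt f (algebraMap K L c) 0 0 = q ^ (n - 1) - 1 ∧
      (∀ b₁ : K, b₁ ≠ 0 → Ntt f (algebraMap K L c) b₁ (μ * b₁) = q ^ (n - 1)) ∧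
      (∀ b₁ b₂ : K, b₂ ≠ μ * b₁ → Ntt f (algebraMap K L c) b₁ b₂ = 0))

/-- `D ⊆ G` is an `(m, n, k, λ)` relative difference set relative to `N`. -/
def IsRelDiffSet {G : Type*} [Group G] (D : Set G) (N : Subgroup G)
    (m n k lam : ℕ) : Prop :=
  Nat.card G = m * n ∧ Nat.card N = n ∧ Nat.card D = k ∧
    (∀ g : G, g ∉ N →
      Nat.card {pq : G × G // pq.1 ∈ D ∧ pq.2 ∈ D ∧ pq.1 * pq.2⁻¹ = g} = lam) ∧
    (∀ g : G, g ∈ N → g ≠ 1 →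
      Nat.card {pq : G × G // pq.1 ∈ D ∧ pq.2 ∈ D ∧ pq.1 * pq.2⁻¹ = g} = 0)

/-! The additive characters `ψ` of `K = 𝔽_p` turn the hypotheses on `f` into the vanishing of
character sums. Set `f 0 = 0`. In the group algebra of `Lˣ` over `ℤ[ζ_p]` put
`F = ∑ u, ψ (f u) · u` and `F* = ∑ u, (ψ (-f u) - 1) · u⁻¹`; then `F * F* = pⁿ`. The exponent of
`Lˣ` being prime to `p`, the group algebra modulo `π = ζ_p - 1` is a von Neumann regular ring on
which the automorphisms `σ_t : ζ_p ↦ ζ_p ^ t` act trivially, and `pⁿ` is a power of `π` up to a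
unit; hence `pⁿ` also divides `σ_t F * F*`. Its coefficient at `a` is `∑ x, ψ (t f(a x) - f x)`, a
sum of `pⁿ` roots of unity: if it is divisible by `pⁿ` and nonzero, all its terms are equal. Some
coefficient is nonzero, because they add up to `pⁿ`, so for every `t` there is an `a` with
`t f(a x) = f x` for all `x`.

The `a ∈ Lˣ` such that `f(a x)` is a multiple of `f x` thus form a subgroup of order `p - 1`, which
can only be `Kˣ`. If `g ∉ Kˣ`, then every `f(g x) - s f x` with `s ∈ K` has the form
`f(g x) - f(a x)` with `a ≠ g`, so its values are equidistributed on `L`. Counting over the lines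
of `K²`, so are the pairs `(f x, f(g x))`, and in particular `(b, b)` is attained `pⁿ⁻²` times. -/

/-- A map `h : X → A` between finite types is equidistributed when all its fibres have the same
size, necessarily `|X| / |A|`; the equation is multiplied out to avoid division in `ℕ`. -/
def IsEquidistributed {X A : Type*} (h : X → A) : Prop :=
  ∀ j, Nat.card A * Nat.card {x // h x = j} = Nat.card X

namespace IsEquidistributed

variable {X Y A B : Type*} {h : X → A}

lemma comp_equiv (hh : IsEquidistributed h) (e : Y ≃ X) : IsEquidistributed (h ∘ e) := fun j => by
  rw [Nat.card_congr e, ← hh j]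
  exact congrArg _ (Nat.card_congr (e.subtypeEquiv fun _ => Iff.rfl))

lemma equiv_comp (hh : IsEquidistributed h) (e : A ≃ B) : IsEquidistributed (e ∘ h) := fun j => by
  rw [← Nat.card_congr e, ← hh (e.symm j)]
  simp only [Function.comp_apply, ← Equiv.eq_symm_apply]

lemma surjective [Finite X] [Nonempty X] (hh : IsEquidistributed h) : Function.Surjective h := by
  intro j
  have hpos : Nat.card {x // h x = j} ≠ 0 := right_ne_zero_of_mul (hh j ▸ Nat.card_pos.ne')
  obtain ⟨⟨x, hx⟩⟩ := (Nat.card_ne_zero.1 hpos).1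
  exact ⟨x, hx⟩

lemma sum_addChar_eq_zero [Fintype X] [AddCommGroup A] [Finite A] {O : Type*} [CommRing O]
    [IsDomain O] [CharZero O] (hh : IsEquidistributed h) {ψ : AddChar A O} (hψ : ψ ≠ 1) :
    ∑ x, ψ (h x) = 0 := by
  classical
  cases nonempty_fintype A
  have hfiber (j : A) : (Nat.card A : O) * ∑ x with h x = j, ψ (h x) = Nat.card X * ψ j := by
    rw [Finset.sum_congr rfl fun x hx => by rw [(Finset.mem_filter.1 hx).2], Finset.sum_const,
      ← Fintype.card_subtype, ← Nat.card_eq_fintype_card, nsmul_eq_mul, ← mul_assoc,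
      ← Nat.cast_mul, hh j]
  refine (mul_eq_zero.1 ?_).resolve_left (Nat.cast_ne_zero.2 (Nat.card_pos (α := A)).ne')
  rw [← Finset.sum_fiberwise (s := Finset.univ) (g := h), Finset.mul_sum]
  simp only [hfiber]
  rw [← Finset.mul_sum, AddChar.sum_eq_zero_of_ne_one hψ, mul_zero]

/-- The `q + 1` lines of `K × K` through a point cover it `q + 1` times and every other point
once. -/
lemma prodMk {K : Type*} [Field K] [Finite K] [Finite X] {u w : X → K} (hu : IsEquidistributed u)
    (hw : ∀ s, IsEquidistributed fun x => w x - s * u x) :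
    IsEquidistributed fun x => (u x, w x) := by
  classical
  cases nonempty_fintype K
  cases nonempty_fintype X
  rintro ⟨b, c⟩
  have hlines (x : X) : Finset.card {s | w x - s * u x = c - s * b} + (if u x = b then 1 else 0) =
      1 + Nat.card K * if (u x, w x) = (b, c) then 1 else 0 := by
    by_cases hub : u x = b
    · by_cases hwc : w x = c <;> simp [hub, hwc, add_comm]
    · have hslope : ({s | w x - s * u x = c - s * b} : Finset K) = {(w x - c) / (u x - b)} := by
        ext s
        rw [Finset.mem_filter_univ, Finset.mem_singleton, eq_div_iff (sub_ne_zero.2 hub)]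
        constructor <;> intro h <;> linear_combination -h
      simp [hub, hslope]
  have hcount : ∑ s, Nat.card {x // w x - s * u x = c - s * b} + Nat.card {x // u x = b} =
      Nat.card X + Nat.card K * Nat.card {x // (u x, w x) = (b, c)} := by
    simp only [Nat.card_eq_fintype_card, Fintype.card_subtype, Finset.card_filter] at hlines ⊢
    rw [Finset.sum_comm, ← Finset.sum_add_distrib, Finset.mul_sum, Fintype.sum_congr _ _ hlines,
      Finset.sum_add_distrib, Finset.sum_const, Finset.card_univ, smul_eq_mul, mul_one]
  have hcount' := congrArg (Nat.card K * ·) hcount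
  simp only [mul_add, Finset.mul_sum, hw _ _, hu b, Finset.sum_const, Finset.card_univ,
    smul_eq_mul, ← Nat.card_eq_fintype_card] at hcount'
  rw [Nat.card_prod]
  linarith

end IsEquidistributed

/-- The zero-extended form of a function that is both balanced and difference balanced. Here `G₀`
plays the role of `L`, the value at `0` is normalised to `0`, and the instance `a = 0` of
`sub_equidistributed` says that `f` itself is equidistributed. -/
structure IsDiffEquidistributed {G₀ A : Type*} [MonoidWithZero G₀] [AddGroup A] (f : G₀ → A) :
    Prop where
  map_zero : f 0 = 0
  sub_equidistributed : ∀ a : G₀, a ≠ 1 → IsEquidistributed fun x => f (a * x) - f x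

/-- The group of units `a` of `G₀` for which the translate `x ↦ f (a * x)` is a unit multiple
of `f`. -/
def scalingSubgroup {G₀ K : Type*} [Monoid G₀] [Monoid K] (f : G₀ → K) : Subgroup G₀ˣ where
  carrier := {a | ∃ t : Kˣ, ∀ x, f (a * x) = t * f x}
  one_mem' := ⟨1, by simp⟩
  mul_mem' := by
    rintro a b ⟨s, hs⟩ ⟨t, ht⟩
    exact ⟨s * t, fun x => by rw [Units.val_mul, mul_assoc, hs, ht, Units.val_mul, mul_assoc]⟩
  inv_mem' := by
    rintro a ⟨t, ht⟩
    exact ⟨t⁻¹, fun x => by rw [Units.eq_inv_mul_iff_mul_eq, ← ht, Units.mul_inv_cancel_left]⟩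

namespace IsDiffEquidistributed

section AddGroup

variable {G₀ A B : Type*} [GroupWithZero G₀] [AddGroup A] [AddGroup B] {f : G₀ → A}

lemma equiv_comp (hf : IsDiffEquidistributed f) (e : A ≃+ B) : IsDiffEquidistributed (e ∘ f) where
  map_zero := by simp [hf.map_zero]
  sub_equidistributed a ha := by
    simpa [Function.comp_def] using (hf.sub_equidistributed a ha).equiv_comp e.toEquiv

lemma const_mul {R : Type*} [Ring R] {f : G₀ → R} (hf : IsDiffEquidistributed f) (t : Rˣ) :
    IsDiffEquidistributed fun x => t * f x :=
  hf.equiv_comp (DistribMulAction.toAddEquiv R t)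

lemma neg_equidistributed (hf : IsDiffEquidistributed f) : IsEquidistributed fun x => -f x := by
  simpa [hf.map_zero] using hf.sub_equidistributed 0 zero_ne_one

lemma equidistributed (hf : IsDiffEquidistributed f) : IsEquidistributed f := by
  simpa [Function.comp_def] using hf.neg_equidistributed.equiv_comp (Equiv.neg A)

lemma sub_equidistributed_of_ne (hf : IsDiffEquidistributed f) {a b : G₀} (hab : a ≠ b) :
    IsEquidistributed fun x => f (a * x) - f (b * x) := by
  rcases eq_or_ne b 0 with rfl | hb
  · simpa [hf.map_zero, Function.comp_def] using
      hf.equidistributed.comp_equiv (Equiv.mulLeft₀ a hab)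
  · have hdiv : a * b⁻¹ ≠ 1 := by rwa [Ne, mul_inv_eq_one₀ hb]
    simpa [Function.comp_def, mul_assoc, hb] using
      (hf.sub_equidistributed _ hdiv).comp_equiv (Equiv.mulLeft₀ b hb)

lemma eq_of_translate_eq [Finite G₀] [Nontrivial A] (hf : IsDiffEquidistributed f) {a b : G₀}
    (hab : ∀ x, f (a * x) = f (b * x)) : a = b := by
  by_contra hne
  obtain ⟨c, hc⟩ := exists_ne (0 : A)
  obtain ⟨x, hx⟩ := (hf.sub_equidistributed_of_ne hne).surjective c
  exact hc (by simp [← hx, hab])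

end AddGroup

section Field

variable {G₀ K : Type*} [GroupWithZero G₀] [Finite G₀] [Field K] {f : G₀ → K}

lemma card_scalingSubgroup (hf : IsDiffEquidistributed f)
    (hscale : ∀ t : Kˣ, ∃ a : G₀ˣ, ∀ x, f (a * x) = t * f x) :
    Nat.card (scalingSubgroup f) = Nat.card Kˣ := by
  choose φ hφ using hscale
  refine (Nat.card_eq_of_bijective (fun t => ⟨φ t, t, hφ t⟩) ⟨fun s t hst => ?_, ?_⟩).symm
  · obtain ⟨x, hx⟩ := hf.equidistributed.surjective 1
    have hφst : φ s = φ t := congrArg Subtype.val hst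
    simpa [hφst, hφ t, hx, Units.val_inj, eq_comm] using hφ s x
  · rintro ⟨a, t, hat⟩
    refine ⟨t, Subtype.ext <| Units.ext <| hf.eq_of_translate_eq fun x => ?_⟩
    rw [hφ, hat]

lemma eq_one_of_mem_scalingSubgroup (hf : IsDiffEquidistributed f) {g : G₀ˣ}
    (hg : g ∈ scalingSubgroup f) {x : G₀} (hx : f x ≠ 0) (hgx : f (g * x) = f x) : g = 1 := by
  obtain ⟨t, ht⟩ := hg
  have htone : (t : K) = 1 := by rwa [ht, mul_eq_right₀ hx] at hgx
  exact Units.ext <| hf.eq_of_translate_eq fun y => by simp [ht, htone]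

lemma prodMk_translate_equidistributed [Finite K] (hf : IsDiffEquidistributed f)
    (hscale : ∀ t : Kˣ, ∃ a : G₀ˣ, ∀ x, f (a * x) = t * f x) {g : G₀ˣ}
    (hg : g ∉ scalingSubgroup f) : IsEquidistributed fun x => (f x, f (g * x)) := by
  refine hf.equidistributed.prodMk fun s => ?_
  obtain ⟨a, hga, ha⟩ : ∃ a : G₀, ↑g ≠ a ∧ ∀ x, s * f x = f (a * x) := by
    rcases eq_or_ne s 0 with rfl | hs
    · exact ⟨0, g.ne_zero, by simp [hf.map_zero]⟩
    · obtain ⟨a, ha⟩ := hscale (Units.mk0 s hs)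
      refine ⟨a, ?_, fun x => (ha x).symm⟩
      exact fun hga => hg ⟨Units.mk0 s hs, hga ▸ ha⟩
  simpa only [ha] using hf.sub_equidistributed_of_ne hga

end Field

end IsDiffEquidistributed

lemma card_mul_inv_eq {G : Type*} [Group G] (D : Set G) (g : G) :
    Nat.card {pq : G × G // pq.1 ∈ D ∧ pq.2 ∈ D ∧ pq.1 * pq.2⁻¹ = g} =
      Nat.card {x // x ∈ D ∧ g * x ∈ D} := by
  refine Nat.card_congr ⟨fun pq => ⟨pq.1.2, pq.2.2.1, ?_⟩,
    fun x => ⟨(g * x.1, x.1), x.2.2, x.2.1, by simp⟩, fun pq => ?_, fun x => rfl⟩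
  · obtain ⟨⟨a, b⟩, ha, hb, rfl⟩ := pq
    simpa using ha
  · obtain ⟨⟨a, b⟩, ha, hb, rfl⟩ := pq
    simp

lemma card_units_subtype {G₀ : Type*} [GroupWithZero G₀] {P : G₀ → Prop} (hP : ¬ P 0) :
    Nat.card {u : G₀ˣ // P u} = Nat.card {x // P x} :=
  Nat.card_congr ((unitsEquivNeZero.subtypeEquiv fun _ => Iff.rfl).trans
    (Equiv.subtypeSubtypeEquivSubtype fun hx hx0 => hP (hx0 ▸ hx)))

theorem IsDiffEquidistributed.isRelDiffSet {G₀ K : Type*} [GroupWithZero G₀] [Finite G₀] [Field K]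
    [Finite K] {f : G₀ → K} (hf : IsDiffEquidistributed f)
    (hscale : ∀ t : Kˣ, ∃ a : G₀ˣ, ∀ x, f (a * x) = t * f x) {n : ℕ} (hn : 2 ≤ n)
    (hcard : Nat.card G₀ = Nat.card K ^ n) {b : K} (hb : b ≠ 0) :
    IsRelDiffSet {u : G₀ˣ | f u = b} (scalingSubgroup f) ((Nat.card K ^ n - 1) / (Nat.card K - 1))
      (Nat.card K - 1) (Nat.card K ^ (n - 1)) (Nat.card K ^ (n - 2)) := by
  obtain ⟨m, rfl⟩ := Nat.exists_eq_add_of_le' hn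
  have hq : 0 < Nat.card K := Nat.card_pos
  refine ⟨?_, ?_, ?_, fun g hg => ?_, fun g hg hg1 => ?_⟩
  · rw [Nat.card_units, hcard, Nat.div_mul_cancel (Nat.sub_one_dvd_pow_sub_one _ _)]
  · rw [hf.card_scalingSubgroup hscale, Nat.card_units]
  · refine Nat.eq_of_mul_eq_mul_left hq ?_
    have := hf.equidistributed b
    rw [hcard, ← card_units_subtype (by simpa [hf.map_zero] using hb.symm)] at this
    exact this.trans (pow_succ' _ _)
  · have hfiber := hf.prodMk_translate_equidistributed hscale hg (b, b)
    simp only [Prod.mk.injEq] at hfiber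
    rw [Nat.card_prod, hcard,
      ← card_units_subtype (by simpa [hf.map_zero] using fun h => absurd h.symm hb)] at hfiber
    rw [card_mul_inv_eq]
    refine Nat.eq_of_mul_eq_mul_left (mul_pos hq hq) (hfiber.trans ?_)
    rw [Nat.add_sub_cancel, pow_add, mul_comm, sq]
  · rw [card_mul_inv_eq, Nat.card_eq_zero]
    refine Or.inl ⟨fun ⟨x, hx, hgx⟩ => hg1 ?_⟩
    rw [Set.mem_ofPred_eq] at hx hgx
    exact hf.eq_one_of_mem_scalingSubgroup hg (hx ▸ hb) (hgx.trans hx.symm)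

/-- The hypothesis `hT` says that `T ⧸ (π)` is von Neumann regular and that its idempotents have
`σ`-fixed lifts. -/
lemma pow_dvd_map_mul {T : Type*} [CommRing T] {π : T} (hπ : IsLeftRegular π) {σ : T →+* T}
    (hσ : π ∣ σ π) (hT : ∀ x, ∃ e z, σ e = e ∧ π ∣ x * (1 - e) ∧ π ∣ e - x * z) (N : ℕ) (x y : T)
    (hxy : π ^ N ∣ x * y) : π ^ N ∣ σ x * y := by
  induction N generalizing x y with
  | zero => simp
  | succ N ih =>
    have cancel {z : T} (hz : π ^ (N + 1) ∣ π * z) : π ^ N ∣ z := by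
      obtain ⟨w, hw⟩ := hz
      exact ⟨w, hπ (hw.trans (by ring))⟩
    obtain ⟨e, z, he, ⟨x₁, hx₁⟩, ⟨d, hd⟩⟩ := hT x
    obtain ⟨y₁, hy₁⟩ : π ∣ e * y := by
      obtain ⟨m, hm⟩ := (dvd_pow_self π N.succ_ne_zero).trans hxy
      exact ⟨d * y + z * m, by linear_combination y * hd + z * hm⟩
    have hx₁y : π ^ N ∣ σ x₁ * y := ih _ _ <| cancel <| by
      rw [← mul_assoc, ← hx₁, mul_right_comm]
      exact hxy.mul_right _
    have hxy₁ : π ^ N ∣ σ x * y₁ := ih _ _ <| cancel <| by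
      rw [mul_left_comm, ← hy₁, mul_left_comm]
      exact hxy.mul_left _
    have hsplit : σ x * y = σ π * (σ x₁ * y) + π * (σ x * y₁) := by
      have hσx₁ : σ x * (1 - e) = σ π * σ x₁ := by simpa [he] using congrArg σ hx₁
      linear_combination y * hσx₁ + σ x * hy₁
    rw [hsplit, pow_succ']
    exact dvd_add (mul_dvd_mul hσ hx₁y) (mul_dvd_mul_left π hxy₁)

section GroupAlgebra

variable {R G : Type*} [CommRing R]

lemma algebraMap_dvd_single [Monoid G] {ϖ r : R} (h : ϖ ∣ r) (g : G) :
    algebraMap R (MonoidAlgebra R G) ϖ ∣ MonoidAlgebra.single g r := by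
  obtain ⟨c, rfl⟩ := h
  exact ⟨MonoidAlgebra.single g c, by simp⟩

lemma dvd_coeff_of_algebraMap_dvd [Monoid G] {r : R} {x : MonoidAlgebra R G}
    (h : algebraMap R (MonoidAlgebra R G) r ∣ x) (g : G) : r ∣ x.coeff g := by
  obtain ⟨y, rfl⟩ := h
  exact ⟨y.coeff g, by rw [← Algebra.smul_def, MonoidAlgebra.coeff_smul]; rfl⟩

lemma isLeftRegular_algebraMap [Monoid G] {ϖ : R} (hϖ : IsLeftRegular ϖ) :
    IsLeftRegular (algebraMap R (MonoidAlgebra R G) ϖ) := by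
  intro x y hxy
  ext g
  simp only [← Algebra.smul_def] at hxy
  exact hϖ (by simpa using congrArg (fun z => MonoidAlgebra.coeff z g) hxy)

lemma exists_dvd_sub_mapRingHom_intCast [Monoid G] {ϖ : R} (hres : ∀ r : R, ∃ m : ℤ, ϖ ∣ r - m)
    (x : MonoidAlgebra R G) : ∃ w : MonoidAlgebra ℤ G, algebraMap R (MonoidAlgebra R G) ϖ ∣
      x - MonoidAlgebra.mapRingHom G (Int.castRingHom R) w := by
  induction x using MonoidAlgebra.induction_linear with
  | zero => exact ⟨0, by simp⟩
  | add x y hx hy =>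
    obtain ⟨v, hv⟩ := hx
    obtain ⟨w, hw⟩ := hy
    exact ⟨v + w, by simpa [add_sub_add_comm] using dvd_add hv hw⟩
  | single g r =>
    obtain ⟨m, hm⟩ := hres r
    exact ⟨MonoidAlgebra.single g m, by simpa using algebraMap_dvd_single hm g⟩

lemma prime_dvd_pow_prime_pow_sub [CommMonoid G] {p n : ℕ} (hp : p.Prime)
    (hG : ∀ g : G, g ^ p ^ n = g) (w : MonoidAlgebra ℤ G) :
    (p : MonoidAlgebra ℤ G) ∣ w ^ p ^ n - w := by
  induction w using MonoidAlgebra.induction_linear with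
  | zero => simp [hp.ne_zero]
  | add v w hv hw =>
    obtain ⟨r, hr⟩ := exists_add_pow_prime_pow_eq hp v w n
    have hsplit : (v + w) ^ p ^ n - (v + w) =
        (v ^ p ^ n - v) + (w ^ p ^ n - w) + p * (v * w * r) := by
      linear_combination hr
    rw [hsplit]
    exact dvd_add (dvd_add hv hw) (dvd_mul_right _ _)
  | single g m =>
    have : Fact p.Prime := ⟨hp⟩
    have hm : (p : ℤ) ∣ m ^ p ^ n - m := by
      rw [← ZMod.intCast_eq_intCast_iff_dvd_sub]
      push_cast
      exact (ZMod.pow_card_pow _).symm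
    simpa [MonoidAlgebra.single_pow, hG] using algebraMap_dvd_single hm g

/-- Modulo `ϖ`, every element is represented by some `w ∈ ℤ[G]`, which satisfies `w ^ pⁿ ≡ w` and
is fixed by any ring endomorphism acting on coefficients. -/
lemma pow_dvd_mapRingHom_mul [CommMonoid G] {p n : ℕ} (hp : p.Prime) (hn : n ≠ 0)
    (hG : ∀ g : G, g ^ p ^ n = g) {ϖ : R} (hϖ : IsLeftRegular ϖ) (hϖp : ϖ ∣ p)
    (hres : ∀ r : R, ∃ m : ℤ, ϖ ∣ r - m) {σ : R →+* R} (hσ : ϖ ∣ σ ϖ) (N : ℕ)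
    {x y : MonoidAlgebra R G} (hxy : algebraMap R (MonoidAlgebra R G) (ϖ ^ N) ∣ x * y) :
    algebraMap R (MonoidAlgebra R G) (ϖ ^ N) ∣ MonoidAlgebra.mapRingHom G σ x * y := by
  rw [map_pow] at hxy ⊢
  refine pow_dvd_map_mul (isLeftRegular_algebraMap hϖ) ?_ (fun x => ?_) N x y hxy
  · simpa using map_dvd (algebraMap R (MonoidAlgebra R G)) hσ
  · obtain ⟨k, hk⟩ := Nat.exists_eq_add_of_le' (hp.two_le.trans (Nat.le_self_pow hn p))
    obtain ⟨w, hw⟩ := exists_dvd_sub_mapRingHom_intCast hres x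
    have hwp := map_dvd (MonoidAlgebra.mapRingHom G (Int.castRingHom R))
      (prime_dvd_pow_prime_pow_sub hp hG w)
    have hϖp' := map_dvd (algebraMap R (MonoidAlgebra R G)) hϖp
    rw [map_natCast] at hwp hϖp'
    replace hwp := hϖp'.trans hwp
    have hfixed : MonoidAlgebra.mapRingHom G σ (MonoidAlgebra.mapRingHom G (Int.castRingHom R) w) =
        MonoidAlgebra.mapRingHom G (Int.castRingHom R) w := by
      rw [← RingHom.comp_apply, ← MonoidAlgebra.mapRingHom_comp, RingHom.ext_int (σ.comp _)]
    set v := MonoidAlgebra.mapRingHom G (Int.castRingHom R) w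
    rw [map_sub, map_pow, hk] at hwp
    refine ⟨v ^ (k + 1), v ^ k, by rw [map_pow, hfixed], ?_, ?_⟩
    · have hsplit : x * (1 - v ^ (k + 1)) = (x - v) * (1 - v ^ (k + 1)) - (v ^ (k + 2) - v) := by
        ring
      rw [hsplit]
      exact dvd_sub (hw.mul_right _) hwp
    · have hsplit : v ^ (k + 1) - x * v ^ k = -((x - v) * v ^ k) := by ring
      rw [hsplit, dvd_neg]
      exact hw.mul_right _

lemma coeff_sum_single [Fintype G] (u : G → R) (a : G) :
    (∑ g, MonoidAlgebra.single g (u g)).coeff a = u a := by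
  classical
  simp [MonoidAlgebra.coeff_sum, Finsupp.single_apply]

lemma sum_single_mul_sum_single_inv [Group G] [Fintype G] (u w : G → R) :
    (∑ g, MonoidAlgebra.single g (u g)) * (∑ h, MonoidAlgebra.single h⁻¹ (w h)) =
      ∑ a, MonoidAlgebra.single a (∑ h, u (a * h) * w h) := by
  have hsum (a : G) : MonoidAlgebra.single a (∑ h, u (a * h) * w h) =
      ∑ h, MonoidAlgebra.single a (u (a * h) * w h) :=
    map_sum (MonoidAlgebra.singleAddHom a) _ _
  simp only [hsum, Finset.sum_mul_sum, MonoidAlgebra.single_mul_single]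
  rw [Finset.sum_comm]
  conv_rhs => rw [Finset.sum_comm]
  refine Finset.sum_congr rfl fun h _ => ?_
  exact Fintype.sum_equiv (Equiv.mulRight h⁻¹) _ _ fun g => by simp

end GroupAlgebra

section Cyclotomic

open NumberField

variable {p : ℕ} [Fact p.Prime] {E : Type*} [Field E] {ζ : E} (hζ : IsPrimitiveRoot ζ p)

/-- The additive character `j ↦ ζ ^ j` of `ZMod p`, with values in the ring of integers. -/
noncomputable def integralZModChar : AddChar (ZMod p) (𝓞 E) :=
  AddChar.zmodChar p hζ.toInteger_isPrimitiveRoot.pow_eq_one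

lemma integralZModChar_natCast (i : ℕ) : integralZModChar hζ i = hζ.toInteger ^ i :=
  AddChar.zmodChar_apply' _ i

lemma integralZModChar_ne_one : integralZModChar hζ ≠ 1 := by
  rw [AddChar.zmod_char_ne_one_iff, ← Nat.cast_one, integralZModChar_natCast, pow_one]
  exact hζ.toInteger_isPrimitiveRoot.ne_one (Fact.out : p.Prime).one_lt

lemma natCast_associated_toInteger_sub_one_pow (n : ℕ) :
    Associated ((hζ.toInteger - 1) ^ ((p - 1) * n)) ((p ^ n : ℕ) : 𝓞 E) := by
  simpa [pow_mul] using
    (IsCyclotomicExtension.Rat.associated_zeta_sub_one_pow_prime p hζ).pow_pow (n := n)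

variable [NumberField E]

lemma sum_intCast_mul_integralZModChar_eq_zero_iff (m : ZMod p → ℤ) :
    ∑ j, m j * integralZModChar hζ j = 0 ↔ ∀ i j, m i = m j := by
  have hbij : Function.Bijective fun i : Fin p => (i.val : ZMod p) :=
    (Fintype.bijective_iff_surjective_and_card _).2
      ⟨fun j => ⟨⟨j.val, j.val_lt⟩, ZMod.natCast_zmod_val j⟩, by simp [ZMod.card]⟩
  have hcoe : algebraMap (𝓞 E) E hζ.toInteger = ζ := rfl
  rw [← hbij.sum_comp, RingOfIntegers.ext_iff]
  simp only [integralZModChar_natCast, map_sum, map_mul, map_pow, map_intCast, map_zero, hcoe]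
  rw [hζ.sum_eq_zero_iff_forall_eq_int Fact.out fun i => m i.val]
  exact (hbij.surjective.forall₂ (p := fun i j => m i = m j)).symm

variable [IsCyclotomicExtension {p} ℚ E]

lemma exists_aeval_toInteger_eq (z : 𝓞 E) :
    ∃ P : Polynomial ℤ, Polynomial.aeval hζ.toInteger P = z := by
  simpa [Algebra.adjoin_singleton_eq_range_aeval] using Algebra.eq_top_iff.1
    (IsCyclotomicExtension.adjoin_primitive_root_eq_top (A := ℤ) hζ.toInteger_isPrimitiveRoot) z

lemma exists_toInteger_sub_one_dvd_sub_intCast (z : 𝓞 E) : ∃ m : ℤ, hζ.toInteger - 1 ∣ z - m := by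
  obtain ⟨P, rfl⟩ := exists_aeval_toInteger_eq hζ z
  refine ⟨P.eval 1, ?_⟩
  have h := Polynomial.sub_dvd_eval_sub hζ.toInteger 1 (P.map (algebraMap ℤ (𝓞 E)))
  simpa [Polynomial.eval_map, Polynomial.aeval_def, Polynomial.eval₂_at_one] using h

lemma exists_sum_intCast_mul_integralZModChar_eq (z : 𝓞 E) :
    ∃ m : ZMod p → ℤ, ∑ j, m j * integralZModChar hζ j = z := by
  obtain ⟨P, rfl⟩ := exists_aeval_toInteger_eq hζ z
  simp only [← zsmul_eq_mul]
  rw [← Submodule.mem_span_range_iff_exists_fun, Polynomial.aeval_eq_sum_range]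
  refine Submodule.sum_mem _ fun i _ => Submodule.smul_mem _ _ (Submodule.subset_span ⟨i, ?_⟩)
  exact integralZModChar_natCast hζ i

lemma exists_ringHom_integralZModChar_mul (t : (ZMod p)ˣ) :
    ∃ σ : 𝓞 E →+* 𝓞 E, ∀ j, σ (integralZModChar hζ j) = integralZModChar hζ (t * j) := by
  let τ := (IsCyclotomicExtension.Rat.galEquivZMod p E).symm t
  refine ⟨MulSemiringAction.toRingHom _ (𝓞 E) τ, fun j => ?_⟩
  have hpow : integralZModChar hζ j ^ p = 1 := by
    rw [← AddChar.map_nsmul_eq_pow]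
    simp
  rw [MulSemiringAction.toRingHom_apply,
    IsCyclotomicExtension.Rat.galEquivZMod_smul_of_pow_eq p E τ hpow, MulEquiv.apply_symm_apply,
    ← AddChar.map_nsmul_eq_pow, nsmul_eq_mul, ZMod.natCast_zmod_val]

/-- The multiplicities of the `p`-th roots of unity in such a sum are congruent modulo the number
of terms, so either they are all equal, and the sum vanishes, or one of them accounts for every
term. -/
lemma eq_of_card_dvd_sum_integralZModChar {Y : Type*} [Fintype Y] {d : Y → ZMod p}
    (hdvd : (Fintype.card Y : 𝓞 E) ∣ ∑ y, integralZModChar hζ (d y))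
    (hne : ∑ y, integralZModChar hζ (d y) ≠ 0) (x y : Y) : d x = d y := by
  set c : ZMod p → ℕ := fun j => Finset.card {y | d y = j} with hc
  have hsum : ∑ y, integralZModChar hζ (d y) = ∑ j, (c j : ℤ) * integralZModChar hζ j := by
    rw [← Finset.sum_fiberwise (s := Finset.univ) (g := d)]
    refine Fintype.sum_congr _ _ fun j => ?_
    rw [Finset.sum_congr rfl fun x hx => by rw [(Finset.mem_filter.1 hx).2]]
    simp [hc]
  obtain ⟨z, hz⟩ := hdvd
  obtain ⟨m, rfl⟩ := exists_sum_intCast_mul_integralZModChar_eq hζ z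
  have hcong : ∀ i j, (c i : ℤ) - Fintype.card Y * m i = c j - Fintype.card Y * m j := by
    rw [← sum_intCast_mul_integralZModChar_eq_zero_iff hζ]
    push_cast
    simp only [sub_mul, Finset.sum_sub_distrib, mul_assoc]
    rw [← Finset.mul_sum, ← hz, hsum]
    simp
  have hmultiplicity : ∃ j, c j = Fintype.card Y := by
    by_contra! hlt
    replace hlt j : c j < Fintype.card Y := (Finset.card_le_univ _).lt_of_ne (hlt j)
    refine hne (hsum.trans ((sum_intCast_mul_integralZModChar_eq_zero_iff hζ _).2 fun i j => ?_))
    rw [← sub_eq_zero]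
    refine Int.eq_zero_of_abs_lt_dvd (m := Fintype.card Y) ⟨m i - m j, ?_⟩ ?_
    · linear_combination hcong i j
    · have := hlt i
      have := hlt j
      rw [abs_lt]
      omega
  obtain ⟨j, hj⟩ := hmultiplicity
  have hall (y : Y) : d y = j := by
    simpa using Finset.ext_iff.1 ((Finset.card_eq_iff_eq_univ _).1 hj) y
  rw [hall x, hall y]

end Cyclotomic

lemma sum_eq_add_sum_units {G₀ M : Type*} [GroupWithZero G₀] [Fintype G₀] [Fintype G₀ˣ]
    [AddCommMonoid M] (φ : G₀ → M) : ∑ x, φ x = φ 0 + ∑ u : G₀ˣ, φ u := by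
  classical
  rw [Fintype.sum_eq_add_sum_subtype_ne φ 0]
  exact congrArg _ (Fintype.sum_equiv unitsEquivNeZero _ _ fun _ => rfl).symm

namespace IsDiffEquidistributed

section CharacterSum

variable {G₀ A O : Type*} [GroupWithZero G₀] [Fintype G₀] [AddCommGroup A] [Finite A] [CommRing O]
  [IsDomain O] [CharZero O] {ψ : AddChar A O} {f g : G₀ → A}

lemma natCard_dvd_sum_addChar (hf : IsDiffEquidistributed f) (hψ : ψ ≠ 1) (a : G₀) :
    (Nat.card G₀ : O) ∣ ∑ x, ψ (f (a * x) - f x) := by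
  rcases eq_or_ne a 1 with rfl | ha
  · simp [Nat.card_eq_fintype_card]
  · rw [(hf.sub_equidistributed a ha).sum_addChar_eq_zero hψ]
    exact dvd_zero _

lemma sum_sum_addChar_eq_natCard (hf : IsDiffEquidistributed f) (hg : IsDiffEquidistributed g)
    (hψ : ψ ≠ 1) : ∑ a, ∑ x, ψ (g (a * x) - f x) = Nat.card G₀ := by
  rw [Finset.sum_comm, Fintype.sum_eq_single 0 fun x hx => ?_]
  · simp [hf.map_zero, hg.map_zero, Nat.card_eq_fintype_card]
  · have htranslate := hg.equidistributed.comp_equiv (Equiv.mulRight₀ x hx)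
    simpa [sub_eq_add_neg, AddChar.map_add_eq_mul, ← Finset.sum_mul] using
      mul_eq_zero_of_left (htranslate.sum_addChar_eq_zero hψ) (ψ (-f x))

lemma exists_sum_addChar_ne_zero (hf : IsDiffEquidistributed f) (hg : IsDiffEquidistributed g)
    (hψ : ψ ≠ 1) : ∃ a : G₀ˣ, ∑ x, ψ (g (a * x) - f x) ≠ 0 := by
  have hsum := hf.sum_sum_addChar_eq_natCard hg hψ
  by_contra! hzero
  have hzero' (a : G₀) : ∑ x, ψ (g (a * x) - f x) = 0 := by
    rcases eq_or_ne a 0 with rfl | ha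
    · simpa [hg.map_zero] using hf.neg_equidistributed.sum_addChar_eq_zero hψ
    · exact hzero (Units.mk0 a ha)
  rw [Fintype.sum_eq_zero _ hzero'] at hsum
  exact Nat.card_pos.ne' (Nat.cast_eq_zero.1 hsum.symm)

/-- Subtracting `1` from `ψ (-f u)` turns the sums over `G₀ˣ` into sums over `G₀`: the term at `0`
becomes `0`, and the translates of `ψ ∘ g` sum to `0`. -/
lemma sum_single_addChar_mul_sum_single_inv [Fintype G₀ˣ] (hf : IsDiffEquidistributed f)
    (hg : IsDiffEquidistributed g) (hψ : ψ ≠ 1) :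
    (∑ u : G₀ˣ, MonoidAlgebra.single u (ψ (g u))) *
        (∑ u : G₀ˣ, MonoidAlgebra.single u⁻¹ (ψ (-f u) - 1)) =
      ∑ a : G₀ˣ, MonoidAlgebra.single a (∑ x, ψ (g (a * x) - f x)) := by
  rw [sum_single_mul_sum_single_inv]
  refine Fintype.sum_congr _ _ fun a => congrArg _ ?_
  have hzero : ∑ x, ψ (g (a * x)) = 0 :=
    (hg.equidistributed.comp_equiv a.mulLeft).sum_addChar_eq_zero hψ
  calc ∑ u : G₀ˣ, ψ (g ↑(a * u)) * (ψ (-f u) - 1)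
      = ∑ x, ψ (g (a * x)) * (ψ (-f x) - 1) := by simp [sum_eq_add_sum_units, hf.map_zero]
    _ = ∑ x, ψ (g (a * x) - f x) - ∑ x, ψ (g (a * x)) := by
      simp only [mul_sub_one, Finset.sum_sub_distrib, sub_eq_add_neg (g _), AddChar.map_add_eq_mul]
    _ = ∑ x, ψ (g (a * x) - f x) := by rw [hzero, sub_zero]

end CharacterSum

section PrimeField

open NumberField

variable {G₀ : Type*} [CommGroupWithZero G₀] {p n : ℕ} [Fact p.Prime] {f : G₀ → ZMod p}

lemma natCard_dvd_sum_integralZModChar [Fintype G₀] (hf : IsDiffEquidistributed f) (hn : n ≠ 0)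
    (hcard : Nat.card G₀ = p ^ n) {E : Type*} [Field E] [NumberField E]
    [IsCyclotomicExtension {p} ℚ E] {ζ : E} (hζ : IsPrimitiveRoot ζ p) (t : (ZMod p)ˣ) (a : G₀ˣ) :
    (Nat.card G₀ : 𝓞 E) ∣ ∑ x, integralZModChar hζ (t * f (a * x) - f x) := by
  classical
  have hψ := integralZModChar_ne_one hζ
  have hassoc := natCast_associated_toInteger_sub_one_pow hζ n
  rw [← hcard] at hassoc
  obtain ⟨σ, hσ⟩ := exists_ringHom_integralZModChar_mul hζ t
  have hpow (g : G₀ˣ) : g ^ p ^ n = g := by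
    rw [← hcard, ← Nat.sub_add_cancel Nat.card_pos, pow_succ, ← Nat.card_units, pow_card_eq_one',
      one_mul]
  have hσζ : hζ.toInteger - 1 ∣ σ (hζ.toInteger - 1) := by
    have hσ1 := hσ 1
    rw [← Nat.cast_one, integralZModChar_natCast, pow_one, Nat.cast_one, mul_one] at hσ1
    rw [map_sub, map_one, hσ1, ← ZMod.natCast_zmod_val (t : ZMod p), integralZModChar_natCast]
    exact sub_one_dvd_pow_sub_one _ _
  have hdvd := pow_dvd_mapRingHom_mul (Fact.out : p.Prime) hn hpow
    (IsLeftCancelMulZero.mul_left_cancel_of_ne_zero hζ.zeta_sub_one_prime'.ne_zero)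
    hζ.toInteger_sub_one_dvd_prime' (exists_toInteger_sub_one_dvd_sub_intCast hζ) hσζ ((p - 1) * n)
    (x := ∑ u : G₀ˣ, MonoidAlgebra.single u (integralZModChar hζ (f u)))
    (y := ∑ u : G₀ˣ, MonoidAlgebra.single u⁻¹ (integralZModChar hζ (-f u) - 1)) <| by
      rw [hf.sum_single_addChar_mul_sum_single_inv hf hψ]
      exact Finset.dvd_sum fun a _ => algebraMap_dvd_single
        (hassoc.dvd.trans (hf.natCard_dvd_sum_addChar hψ a)) a
  simp only [map_sum, MonoidAlgebra.mapRingHom_single, hσ] at hdvd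
  rw [hf.sum_single_addChar_mul_sum_single_inv (hf.const_mul t) hψ] at hdvd
  simpa only [coeff_sum_single] using hassoc.symm.dvd.trans (dvd_coeff_of_algebraMap_dvd hdvd a)

theorem exists_map_mul_eq_mul [Finite G₀] (hf : IsDiffEquidistributed f) (hn : n ≠ 0)
    (hcard : Nat.card G₀ = p ^ n) (t : (ZMod p)ˣ) : ∃ a : G₀ˣ, ∀ x, f (a * x) = t * f x := by
  cases nonempty_fintype G₀
  have : IsCyclotomicExtension {p} ℚ (CyclotomicField p ℚ) :=
    CyclotomicField.isCyclotomicExtension p ℚ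
  have hζ := IsCyclotomicExtension.zeta_spec p ℚ (CyclotomicField p ℚ)
  obtain ⟨a, ha⟩ :=
    hf.exists_sum_addChar_ne_zero (hf.const_mul t⁻¹) (integralZModChar_ne_one hζ)
  have hdvd := hf.natCard_dvd_sum_integralZModChar hn hcard hζ t⁻¹ a
  rw [Nat.card_eq_fintype_card] at hdvd
  refine ⟨a, fun x => ?_⟩
  have hconst := eq_of_card_dvd_sum_integralZModChar hζ hdvd ha x 0
  rw [mul_zero, hf.map_zero, mul_zero, sub_zero, sub_eq_zero] at hconst
  rw [← hconst, Units.mul_inv_cancel_left]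

end PrimeField

end IsDiffEquidistributed

theorem IsDiffEquidistributed.exists_map_mul_eq_mul_of_prime_card {G₀ K : Type*}
    [CommGroupWithZero G₀] [Finite G₀] [Field K] [Finite K] {f : G₀ → K}
    (hf : IsDiffEquidistributed f) (hK : (Nat.card K).Prime) {n : ℕ} (hn : n ≠ 0)
    (hcard : Nat.card G₀ = Nat.card K ^ n) (t : Kˣ) : ∃ a : G₀ˣ, ∀ x, f (a * x) = t * f x := by
  cases nonempty_fintype K
  have : Fact (Nat.card K).Prime := ⟨hK⟩
  let e : K ≃+* ZMod (Nat.card K) :=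
    (ZMod.ringEquivOfPrime K hK Nat.card_eq_fintype_card.symm).symm
  obtain ⟨a, ha⟩ := (hf.equiv_comp e.toAddEquiv).exists_map_mul_eq_mul hn hcard
    (Units.map e.toMonoidHom t)
  exact ⟨a, fun x => e.injective <| by simpa using ha x⟩

section Balanced

variable {K L : Type*} [Field K] [Field L] {n : ℕ} {f g : L → K}

lemma IsBalanced.congr {q : ℕ} (hf : IsBalanced q n f) (hfg : ∀ x ≠ 0, f x = g x) :
    IsBalanced q n g := by
  have hset (b : K) : {x : L | x ≠ 0 ∧ f x = b} = {x | x ≠ 0 ∧ g x = b} := by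
    ext x
    exact and_congr_right fun hx => by rw [hfg x hx]
  simpa only [IsBalanced, hset] using hf

lemma IsBalanced.isEquidistributed [Finite K] [Finite L] (hn : n ≠ 0)
    (hL : Nat.card L = Nat.card K ^ n) (hf : IsBalanced (Nat.card K) n f) (hf0 : f 0 = 0) :
    IsEquidistributed f := by
  intro b
  rw [hL, ← mul_pow_sub_one hn]
  refine congrArg _ ?_
  rcases eq_or_ne b 0 with rfl | hb
  · have hinsert : {x | f x = 0} = insert 0 {x : L | x ≠ 0 ∧ f x = 0} := by
      ext x
      by_cases hx : x = 0 <;> simp [hx, hf0]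
    have hncard := Set.ncard_insert_of_notMem (s := {x : L | x ≠ 0 ∧ f x = 0}) (a := 0) (by simp)
    rw [← hinsert, ← Nat.card_coe_set_eq, ← Nat.card_coe_set_eq, hf.1] at hncard
    exact hncard.trans (Nat.sub_add_cancel (Nat.pow_pos Nat.card_pos))
  · rw [← hf.2 b hb]
    refine Nat.card_congr (Equiv.subtypeEquivRight fun x => ?_)
    exact (and_iff_right_of_imp fun hx hx0 => hb (by rw [← hx, hx0, hf0])).symm

lemma IsDiffBalanced.isDiffEquidistributed_update [DecidableEq L] [Finite K] [Finite L]
    (hn : n ≠ 0) (hL : Nat.card L = Nat.card K ^ n) (hdb : IsDiffBalanced (Nat.card K) n f)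
    (hbal : IsBalanced (Nat.card K) n f) : IsDiffEquidistributed (Function.update f 0 0) where
  map_zero := by simp
  sub_equidistributed a ha := by
    rcases eq_or_ne a 0 with rfl | ha0
    · have hbal' := hbal.congr fun x hx => (Function.update_of_ne hx 0 f).symm
      simpa [Function.comp_def] using
        (hbal'.isEquidistributed hn hL (Function.update_self 0 0 f)).equiv_comp (Equiv.neg K)
    · refine ((hdb a ha0 ha).congr fun x hx => ?_).isEquidistributed hn hL (by simp)
      simp [hx, ha0]

end Balanced

lemma eq_rootsOfUnity_natCard {R : Type*} [CommRing R] [IsDomain R] (H : Subgroup Rˣ) [Finite H] :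
    H = rootsOfUnity (Nat.card H) R := by
  have : NeZero (Nat.card H) := ⟨Nat.card_pos.ne'⟩
  refine Subgroup.eq_of_le_of_card_ge (fun u hu => ?_) (card_rootsOfUnity R _)
  exact congrArg Subtype.val (pow_card_eq_one' (x := (⟨u, hu⟩ : H)))

lemma subgroup_units_eq_of_natCard_eq {R : Type*} [CommRing R] [IsDomain R] {H H' : Subgroup Rˣ}
    [Finite H] (hcard : Nat.card H = Nat.card H') : H = H' := by
  have : Finite H' := Nat.finite_of_card_ne_zero (hcard ▸ Nat.card_pos.ne')
  rw [eq_rootsOfUnity_natCard H, hcard, ← eq_rootsOfUnity_natCard H']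

theorem stmt_15_general {K L : Type*} [Field K] [Field L] [Algebra K L] [Fintype K] [Fintype L]
    (p n : ℕ) (hp : p.Prime) (hn : 2 ≤ n)
    (hK : Fintype.card K = p) (hL : Fintype.card L = p ^ n)
    (f : L → K) (hdb : IsDiffBalanced p n f) (hbal : IsBalanced p n f) (b : K) (hb : b ≠ 0) :
    IsRelDiffSet {u : Lˣ | f u = b} (Units.map (algebraMap K L).toMonoidHom).range
      ((p ^ n - 1) / (p - 1)) (p - 1) (p ^ (n - 1)) (p ^ (n - 2)) := by
  classical
  rw [← Nat.card_eq_fintype_card] at hK hL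
  subst hK
  have hn0 : n ≠ 0 := by omega
  have hf := hdb.isDiffEquidistributed_update hn0 hL hbal
  have hscale := hf.exists_map_mul_eq_mul_of_prime_card hp hn0 hL
  have hrange : scalingSubgroup (Function.update f 0 0) =
      (Units.map (algebraMap K L).toMonoidHom).range :=
    subgroup_units_eq_of_natCard_eq <| (hf.card_scalingSubgroup hscale).trans <|
      Nat.card_congr <| Equiv.ofInjective _ <| Units.map_injective (algebraMap K L).injective
  simpa [hrange] using hf.isRelDiffSet hscale hn hL hb

/-- If `f : L∖{0} → 𝔽_p` is difference balanced and balanced, then each nonzero-value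
preimage `D_b` is a `((pⁿ−1)/(p−1), p−1, p^{n−1}, p^{n−2})` relative difference set in
`L^×` relative to `K^×`. -/
theorem stmt_15 {K L : Type*} [Field K] [Field L] [Algebra K L] [Fintype K] [Fintype L]
    (p n : ℕ) (hp : p.Prime) (hodd : Odd p) (hn : 2 ≤ n)
    (hK : Fintype.card K = p) (hL : Fintype.card L = p ^ n)
    (f : L → K) (hdb : IsDiffBalanced p n f) (hbal : IsBalanced p n f) :
    ∀ b : K, b ≠ 0 →
      IsRelDiffSet {u : Lˣ | f (u : L) = b}
        (Units.map (algebraMap K L).toMonoidHom).range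
        ((p ^ n - 1) / (p - 1)) (p - 1) (p ^ (n - 1)) (p ^ (n - 2)) :=
  fun b hb => stmt_15_general p n hp hn hK hL f hdb hbal b hb
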